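/- Let a : ℝ → [0,1] satisfy (A1') and have √a κ-Lipschitz, and H ∈ 𝓗_sqc(α0,α1,γ,η) with γ > 2. Let λ0 := inf{μ : a u'' + H(x,u') = μ admits a continuous viscosity supersolution on ℝ}, let λ > λ0 and let u_{λ0} be a Lipschitz viscosity solution of a u'' + H(x,u') = λ0 on ℝ. Then there exist functions f⁻_λ, f⁺_λ ∈ C¹(A), where A := {a > 0}, satisfying f⁻_λ < u'_{λ0} < f⁺_λ on A and solving the ODE a(x)f' + H(x,f) = λ on A. Furthermore there exists a constant K_λ = K(α0,α1,γ,λ), depending only on α0, α1, γ and λ, such that |f^±_λ(x)| ≤ K_λ for all x ∈ A. -/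

import Mathlib

open Real Set Filter Topology MeasureTheory

noncomputable section

/-- The Hamiltonian class `𝓗(α₀, α₁, γ)`: growth condition (H1) and the local
Lipschitz conditions (H2), (H3). -/
def HamClass (a0 a1 g : ℝ) (H : ℝ → ℝ → ℝ) : Prop :=
  (∀ x p : ℝ, a0 * |p| ^ g - 1 / a0 ≤ H x p) ∧
  (∀ x p : ℝ, H x p ≤ a1 * (|p| ^ g + 1)) ∧
  (∀ x p q : ℝ, |H x p - H x q| ≤ a1 * (|p| + |q| + 1) ^ (g - 1) * |p - q|) ∧
  (∀ x y p : ℝ, |H x p - H y p| ≤ a1 * (|p| ^ g + 1) * |x - y|)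

/-- The strictly quasiconvex class `𝓗_sqc(α₀, α₁, γ, η)` with (unique) minimizer map
`phat`. -/
def HamSqc (a0 a1 g eta : ℝ) (H : ℝ → ℝ → ℝ) (phat : ℝ → ℝ) : Prop :=
  HamClass a0 a1 g H ∧
  (∀ x p : ℝ, H x (phat x) ≤ H x p) ∧
  (∀ x p : ℝ, (∀ q : ℝ, H x p ≤ H x q) → p = phat x) ∧
  (∀ x p1 p2 : ℝ, p1 < p2 → p2 ≤ phat x → eta * |p1 - p2| ≤ H x p1 - H x p2) ∧
  (∀ x p1 p2 : ℝ, phat x ≤ p1 → p1 < p2 → eta * |p1 - p2| ≤ H x p2 - H x p1)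

/-- A continuous `u` is a viscosity supersolution of `a(x) u'' + H(x, u') = lam` on `U`:
at every local minimum point `x0 ∈ U` of `u - φ`, with `φ` of class `C²`, one has
`a(x0) φ''(x0) + H(x0, φ'(x0)) ≤ lam`. -/
def ViscSuperOn (a : ℝ → ℝ) (H : ℝ → ℝ → ℝ) (lam : ℝ) (U : Set ℝ) (u : ℝ → ℝ) : Prop :=
  ∀ φ : ℝ → ℝ, ContDiff ℝ 2 φ → ∀ x0 ∈ U, IsLocalMin (fun x => u x - φ x) x0 →
    a x0 * deriv (deriv φ) x0 + H x0 (deriv φ x0) ≤ lam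

/-- Viscosity subsolution of `a(x) u'' + H(x, u') = lam` on `U`. -/
def ViscSubOn (a : ℝ → ℝ) (H : ℝ → ℝ → ℝ) (lam : ℝ) (U : Set ℝ) (u : ℝ → ℝ) : Prop :=
  ∀ φ : ℝ → ℝ, ContDiff ℝ 2 φ → ∀ x0 ∈ U, IsLocalMax (fun x => u x - φ x) x0 →
    lam ≤ a x0 * deriv (deriv φ) x0 + H x0 (deriv φ x0)

/-- Viscosity solution of `a(x) u'' + H(x, u') = lam` on `U`. -/
def ViscSolOn (a : ℝ → ℝ) (H : ℝ → ℝ → ℝ) (lam : ℝ) (U : Set ℝ) (u : ℝ → ℝ) : Prop :=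
  ViscSubOn a H lam U u ∧ ViscSuperOn a H lam U u

/-- The critical value `λ₀`: the infimum of the levels `lam` at which the stationary
equation `a u'' + H(x, u') = lam` admits a continuous viscosity supersolution on `ℝ`. -/
def CriticalValue (a : ℝ → ℝ) (H : ℝ → ℝ → ℝ) : ℝ :=
  sInf {lam : ℝ | ∃ u : ℝ → ℝ, Continuous u ∧ ViscSuperOn a H lam Set.univ u}

/-- Condition (A1'): `a ≢ 0` and every connected component of `A := {a > 0}` is bounded
(components of an open subset of `ℝ` are automatically open intervals). -/
def CondA1' (a : ℝ → ℝ) : Prop :=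
  (∃ x, a x ≠ 0) ∧
  ∀ x, 0 < a x → Bornology.IsBounded (connectedComponentIn {y : ℝ | 0 < a y} x)


lemma quad_deriv (A B C : ℝ) (x : ℝ) :
    HasDerivAt (fun t : ℝ => A + B * t + C * t ^ 2) (B + 2 * C * x) x := by
  have h := (((hasDerivAt_id x).const_mul B).const_add A).add
    (((hasDerivAt_id x).pow 2).const_mul C)
  refine (h.congr_deriv ?_)
  simp; ring

lemma quad_deriv1 (A B C : ℝ) :
    deriv (fun t : ℝ => A + B * t + C * t ^ 2) = fun x => B + 2 * C * x := by
  funext x; exact (quad_deriv A B C x).deriv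

lemma quad_deriv2 (A B C : ℝ) (x : ℝ) :
    deriv (deriv (fun t : ℝ => A + B * t + C * t ^ 2)) x = 2 * C := by
  rw [quad_deriv1]
  have h := ((hasDerivAt_id x).const_mul (2 * C)).const_add B
  simp

lemma quad_contDiff (A B C : ℝ) : ContDiff ℝ 2 (fun t : ℝ => A + B * t + C * t ^ 2) := by
  fun_prop

lemma visc_convex (w : ℝ → ℝ) (hw : Continuous w) (c d : ℝ)
    (h : ∀ φ : ℝ → ℝ, ContDiff ℝ 2 φ → ∀ x0 ∈ Ioo c d, IsLocalMax (fun x => w x - φ x) x0 →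
      0 ≤ deriv (deriv φ) x0) : ConvexOn ℝ (Ioo c d) w := by
  refine LinearOrder.convexOn_of_lt (convex_Ioo c d) ?_
  intro x hx y hy hxy p q hp hq hpq
  by_contra hcon
  push Not at hcon
  simp only [smul_eq_mul] at hcon
  set z := p * x + q * y with hz
  have hp' : p = 1 - q := by linarith
  have hzx : z - x = q * (y - x) := by rw [hz, hp']; ring
  have hyz : y - z = p * (y - x) := by
    have : q = 1 - p := by linarith
    rw [hz, this]; ring
  have hyx : 0 < y - x := by linarith
  have hzx0 : 0 < z - x := by rw [hzx]; positivity
  have hyz0 : 0 < y - z := by rw [hyz]; positivity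
  set gap := w z - (p * w x + q * w y) with hgap
  have hgap0 : 0 < gap := by linarith
  set s := (w y - w x) / (y - x) with hs
  have hs' : s * (y - x) = w y - w x := by rw [hs]; field_simp
  set δ := gap / (2 * ((z - x) * (y - z))) with hδ
  have hδ0 : 0 < δ := by positivity
  have hδ' : δ * ((z - x) * (y - z)) = gap / 2 := by rw [hδ]; field_simp
  set φ : ℝ → ℝ := fun t => (w x - s * x - δ * x * y) + (s + δ * (x + y)) * t + (-δ) * t ^ 2
    with hφ
  have hφx : φ x = w x := by simp only [hφ]; ring
  have hφy : φ y = w y := by simp only [hφ]; linear_combination hs'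
  have hφz : w z - φ z = gap / 2 := by
    have : φ z = w x + s * (z - x) + δ * ((z - x) * (y - z)) := by simp only [hφ]; ring
    rw [this, hδ', hzx, hgap, hp']
    linear_combination (-q) * hs'
  have hcont : ContinuousOn (fun t => w t - φ t) (Icc x y) :=
    (hw.sub (quad_contDiff _ _ _).continuous).continuousOn
  obtain ⟨x0, hx0, hmax⟩ := isCompact_Icc.exists_isMaxOn ⟨z, ⟨by linarith, by linarith⟩⟩ hcont
  have hge : gap / 2 ≤ w x0 - φ x0 := by
    rw [← hφz]; exact hmax (⟨by linarith, by linarith⟩ : z ∈ Icc x y)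
  have h1 : x0 ≠ x := by rintro rfl; linarith
  have h2 : x0 ≠ y := by rintro rfl; linarith
  have h3 : x < x0 := lt_of_le_of_ne hx0.1 (Ne.symm h1)
  have h4 : x0 < y := lt_of_le_of_ne hx0.2 h2
  have h5 := h φ (quad_contDiff _ _ _) x0 ⟨by linarith [hx.1], by linarith [hy.2]⟩
    (hmax.isLocalMax (Icc_mem_nhds h3 h4))
  rw [hφ, quad_deriv2] at h5
  linarith

lemma deriv2_add (φ G : ℝ → ℝ) (hφ : ContDiff ℝ 2 φ) (hG : ContDiff ℝ 2 G) (x : ℝ) :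
    deriv (φ + G) x = deriv φ x + deriv G x ∧
    deriv (deriv (φ + G)) x = deriv (deriv φ) x + deriv (deriv G) x := by
  have d1 : ∀ f : ℝ → ℝ, ContDiff ℝ 2 f → Differentiable ℝ f :=
    fun f hf => hf.differentiable (by norm_num)
  have d2 : ∀ f : ℝ → ℝ, ContDiff ℝ 2 f → Differentiable ℝ (deriv f) := fun f hf => by
    have : ContDiff ℝ (1 + 1) f := by simpa [one_add_one_eq_two] using hf
    exact ((contDiff_succ_iff_deriv.1 this).2.2).differentiable (by norm_num)
  have e : deriv (φ + G) = deriv φ + deriv G := by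
    funext y; exact deriv_add (d1 _ hφ y) (d1 _ hG y)
  constructor
  · rw [e]; rfl
  · rw [e]; exact deriv_add (d2 _ hφ x) (d2 _ hG x)

lemma visc_convex_sub (u G : ℝ → ℝ) (hu : Continuous u) (hG : ContDiff ℝ 2 G) (c d : ℝ)
    (h : ∀ φ : ℝ → ℝ, ContDiff ℝ 2 φ → ∀ x0 ∈ Ioo c d, IsLocalMax (fun x => u x - φ x) x0 →
      deriv (deriv G) x0 ≤ deriv (deriv φ) x0) : ConvexOn ℝ (Ioo c d) (u - G) := by
  apply visc_convex _ (hu.sub hG.continuous)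
  intro φ hφ x0 hx0 hm
  have := h (φ + G) (hφ.add hG) x0 hx0 (by
    convert hm using 2 with x
    simp; ring)
  rw [(deriv2_add φ G hφ hG x0).2] at this
  linarith

lemma visc_concave_sub (u G : ℝ → ℝ) (hu : Continuous u) (hG : ContDiff ℝ 2 G) (c d : ℝ)
    (h : ∀ φ : ℝ → ℝ, ContDiff ℝ 2 φ → ∀ x0 ∈ Ioo c d, IsLocalMin (fun x => u x - φ x) x0 →
      deriv (deriv φ) x0 ≤ deriv (deriv G) x0) : ConvexOn ℝ (Ioo c d) (G - u) := by
  have e : G - u = (-u) - (-G) := by ring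
  have dn : ∀ f : ℝ → ℝ, deriv (deriv (-f)) = - deriv (deriv f) := fun f => by
    have : deriv (-f) = -deriv f := by funext y; exact deriv.neg
    rw [this]; funext y; exact deriv.neg
  rw [e]
  apply visc_convex_sub (-u) (-G) hu.neg hG.neg
  intro φ hφ x0 hx0 hm
  have := h (-φ) hφ.neg x0 hx0 (by
    have e2 : (fun x => u x - (-φ) x) = fun x => -((-u) x - φ x) := by
      funext x; simp only [Pi.neg_apply]; ring
    rw [e2]; exact hm.neg)
  rw [dn] at this ⊢
  simp only [Pi.neg_apply] at *
  linarith

lemma diff_of_convex (f g h : ℝ → ℝ) (S : Set ℝ) (hS : IsOpen S) (hf : ConvexOn ℝ S f)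
    (hg : ConvexOn ℝ S g) (hfg : f + g = h) (x : ℝ) (hx : x ∈ S) (hh : DifferentiableAt ℝ h x) :
    DifferentiableAt ℝ f x := by
  have hxi : x ∈ interior S := by rwa [hS.interior_eq]
  have fr := (hf.differentiableWithinAt_Ioi_of_mem_interior hxi).hasDerivWithinAt
  have fl := (hf.differentiableWithinAt_Iio_of_mem_interior hxi).hasDerivWithinAt
  have gr := (hg.differentiableWithinAt_Ioi_of_mem_interior hxi).hasDerivWithinAt
  have gl := (hg.differentiableWithinAt_Iio_of_mem_interior hxi).hasDerivWithinAt
  have f1 := hf.leftDeriv_le_rightDeriv_of_mem_interior hxi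
  have g1 := hg.leftDeriv_le_rightDeriv_of_mem_interior hxi
  have hr := fr.add gr
  have hl := fl.add gl
  rw [hfg] at hr hl
  have e1 := (uniqueDiffWithinAt_Ioi x).eq_deriv _ hr hh.hasDerivAt.hasDerivWithinAt
  have e2 := (uniqueDiffWithinAt_Iio x).eq_deriv _ hl hh.hasDerivAt.hasDerivWithinAt
  have e3 : derivWithin f (Iio x) x = derivWithin f (Ioi x) x := by linarith
  rw [e3] at fl
  have := (hasDerivWithinAt_Iio_iff_Iic.1 fl).union (hasDerivWithinAt_Ioi_iff_Ici.1 fr)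
  rw [Iic_union_Ici, hasDerivWithinAt_univ] at this
  exact this.differentiableAt

lemma semi_reg (u G1 G2 : ℝ → ℝ) (S : Set ℝ) (hS : IsOpen S) (h1 : ContDiff ℝ 2 G1)
    (h2 : ContDiff ℝ 2 G2) (hc : ConvexOn ℝ S (u - G1)) (hd : ConvexOn ℝ S (G2 - u)) :
    (∀ x ∈ S, DifferentiableAt ℝ u x) ∧
    ∀ x ∈ S, ∀ y ∈ S, x ≤ y → deriv u x - deriv G1 x ≤ deriv u y - deriv G1 y ∧
      deriv G2 x - deriv u x ≤ deriv G2 y - deriv u y := by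
  have D1 : Differentiable ℝ G1 := h1.differentiable (by norm_num)
  have D2 : Differentiable ℝ G2 := h2.differentiable (by norm_num)
  have hu : ∀ x ∈ S, DifferentiableAt ℝ u x := by
    intro x hx
    have := diff_of_convex (u - G1) (G2 - u) (G2 - G1) S hS hc hd (by ring) x hx
      ((D2 x).sub (D1 x))
    have := this.add (D1 x)
    simpa using this
  refine ⟨hu, ?_⟩
  intro x hx y hy hxy
  constructor
  · have := hc.monotoneOn_deriv (fun z hz => (hu z hz).sub (D1 z)) hx hy hxy
    rwa [deriv_sub (hu x hx) (D1 x), deriv_sub (hu y hy) (D1 y)] at this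
  · have := hd.monotoneOn_deriv (fun z hz => (D2 z).sub (hu z hz)) hx hy hxy
    rwa [deriv_sub (D2 x) (hu x hx), deriv_sub (D2 y) (hu y hy)] at this

lemma slope_bound (u φ : ℝ → ℝ) (L : NNReal) (hu : LipschitzWith L u) (x0 : ℝ)
    (hφ : DifferentiableAt ℝ φ x0) (hm : IsLocalMax (fun x => u x - φ x) x0) :
    |deriv φ x0| ≤ L := by
  have hd := hasDerivAt_iff_tendsto_slope.1 hφ.hasDerivAt
  have hL : ∀ x, |u x - u x0| ≤ L * |x - x0| := fun x => by
    simpa [Real.dist_eq] using hu.dist_le_mul x x0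
  have hr : Tendsto (slope φ x0) (𝓝[>] x0) (𝓝 (deriv φ x0)) :=
    hd.mono_left (nhdsWithin_mono _ (fun x hx => ne_of_gt hx))
  have hl : Tendsto (slope φ x0) (𝓝[<] x0) (𝓝 (deriv φ x0)) :=
    hd.mono_left (nhdsWithin_mono _ (fun x hx => ne_of_lt hx))
  rw [abs_le]
  constructor
  · refine ge_of_tendsto hr ?_
    filter_upwards [self_mem_nhdsWithin, mem_nhdsWithin_of_mem_nhds hm] with x hx hx2
    have hx' : 0 < x - x0 := sub_pos.2 hx
    rw [slope_def_field, le_div_iff₀ hx']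
    have := hL x
    rw [abs_of_pos hx'] at this
    have := (abs_le.1 this).1
    have hx2 : u x - φ x ≤ u x0 - φ x0 := hx2
    linarith
  · refine le_of_tendsto hl ?_
    filter_upwards [self_mem_nhdsWithin, mem_nhdsWithin_of_mem_nhds hm] with x hx hx2
    have hx' : x - x0 < 0 := sub_neg.2 hx
    rw [slope_def_field, div_le_iff_of_neg hx']
    have := hL x
    rw [abs_of_neg hx'] at this
    have := (abs_le.1 this).1
    have hx2 : u x - φ x ≤ u x0 - φ x0 := hx2
    linarith

lemma slope_bound' (u φ : ℝ → ℝ) (L : NNReal) (hu : LipschitzWith L u) (x0 : ℝ)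
    (hφ : DifferentiableAt ℝ φ x0) (hm : IsLocalMin (fun x => u x - φ x) x0) :
    |deriv φ x0| ≤ L := by
  have := slope_bound (fun x => - u x) (fun x => - φ x) L hu.neg x0 hφ.neg (by
    have e2 : (fun x => -u x - (-φ x)) = fun x => -(u x - φ x) := by
      funext x; ring
    rw [e2]; exact hm.neg)
  simpa using this

lemma H_cont (a0 a1 g : ℝ) (H : ℝ → ℝ → ℝ) (hg : 2 < g) (h : HamClass a0 a1 g H) :
    Continuous (fun z : ℝ × ℝ => H z.1 z.2) := by
  obtain ⟨-, -, h2, h3⟩ := h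
  rw [continuous_iff_continuousAt]
  rintro ⟨x, p⟩
  rw [ContinuousAt, tendsto_iff_dist_tendsto_zero]
  have hc : Continuous (fun z : ℝ × ℝ => a1 * (|p| ^ g + 1) * |z.1 - x| +
      a1 * (|z.2| + |p| + 1) ^ (g - 1) * |z.2 - p|) := by
    have : Continuous (fun z : ℝ × ℝ => (|z.2| + |p| + 1) ^ (g - 1)) :=
      Continuous.rpow_const (by fun_prop) (fun _ => Or.inr (by linarith))
    fun_prop
  have ht := hc.tendsto (x, p)
  simp only [sub_self, abs_zero, mul_zero, add_zero] at ht
  refine squeeze_zero (fun _ => dist_nonneg) (fun z => ?_) ht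
  rw [Real.dist_eq]
  have e1 := h2 z.1 z.2 p
  have e2 := h3 z.1 x p
  have := abs_sub_le (H z.1 z.2) (H z.1 p) (H x p)
  simp only at *
  linarith

lemma visc_reg (a : ℝ → ℝ) (H : ℝ → ℝ → ℝ) (a0 a1 g lam0 : ℝ) (u : ℝ → ℝ) (L : NNReal)
    (ha : Continuous a) (ha0 : 0 < a0) (ha1 : 0 < a1) (hg : 2 < g) (hH : HamClass a0 a1 g H)
    (hu : LipschitzWith L u) (hs : ViscSolOn a H lam0 Set.univ u) (x : ℝ) (hx : 0 < a x) :
    HasDerivAt (deriv u) ((lam0 - H x (deriv u x)) / a x) x := by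
  have hHc := H_cont a0 a1 g H hg hH
  have hn : {y | a x / 2 < a y} ∈ 𝓝 x :=
    (isOpen_lt continuous_const ha).mem_nhds (by change a x / 2 < a x; linarith)
  obtain ⟨ε, hε, hball⟩ := Metric.mem_nhds_iff.1 hn
  set m := a x / 2 with hm
  have hm0 : 0 < m := by positivity
  have hIm : ∀ y ∈ Ioo (x - ε) (x + ε), m < a y := fun y hy =>
    hball (by rw [Metric.mem_ball, Real.dist_eq, abs_lt]; constructor <;> linarith [hy.1, hy.2])
  set B := |lam0| + a1 * ((L : ℝ) ^ g + 1) + 1 / a0 with hB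
  have hBH : ∀ y p : ℝ, |p| ≤ L → |lam0 - H y p| ≤ B := by
    intro y p hp
    have e1 := hH.1 y p
    have e2 := hH.2.1 y p
    have e3 : |p| ^ g ≤ (L : ℝ) ^ g := rpow_le_rpow (abs_nonneg _) hp (by linarith)
    have e4 : 0 ≤ a0 * |p| ^ g := by positivity
    have e5 : a1 * (|p| ^ g + 1) ≤ a1 * ((L : ℝ) ^ g + 1) := by gcongr
    have e6 : 0 ≤ a1 * ((L : ℝ) ^ g + 1) := by positivity
    have e7 : 0 ≤ 1 / a0 := by positivity
    rw [abs_le]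
    constructor
    · linarith [neg_abs_le lam0]
    · linarith [le_abs_self lam0]
  have hB0 : 0 ≤ B := by positivity
  set M := B / m with hM
  have hM0 : 0 ≤ M := by positivity
  have hBM : ∀ y ∈ Ioo (x - ε) (x + ε), B ≤ M * a y := fun y hy => by
    have : B = M * m := by rw [hM]; field_simp
    rw [this]; exact mul_le_mul_of_nonneg_left (hIm y hy).le hM0
  have dφ : ∀ f : ℝ → ℝ, ContDiff ℝ 2 f → Differentiable ℝ f :=
    fun f hf => hf.differentiable (by norm_num)
  -- Step 1
  have hG1 : ContDiff ℝ 2 (fun t : ℝ => 0 + 0 * t + (-(M / 2)) * t ^ 2) := quad_contDiff _ _ _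
  have hG2 : ContDiff ℝ 2 (fun t : ℝ => 0 + 0 * t + (M / 2) * t ^ 2) := quad_contDiff _ _ _
  have c1 := visc_convex_sub u _ hu.continuous hG1 (x - ε) (x + ε) (by
    intro φ hφ x0 hx0 hmx
    rw [quad_deriv2]
    have k1 := hs.1 φ hφ x0 (mem_univ _) hmx
    have k2 := hBH x0 _ (slope_bound u φ L hu x0 (dφ φ hφ x0) hmx)
    have k3 := (abs_le.1 k2).1
    have k4 := hBM x0 hx0
    have k5 := hIm x0 hx0
    by_contra hcon
    push Not at hcon
    nlinarith)
  have c2 := visc_concave_sub u _ hu.continuous hG2 (x - ε) (x + ε) (by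
    intro φ hφ x0 hx0 hmx
    rw [quad_deriv2]
    have k1 := hs.2 φ hφ x0 (mem_univ _) hmx
    have k2 := hBH x0 _ (slope_bound' u φ L hu x0 (dφ φ hφ x0) hmx)
    have k3 := (abs_le.1 k2).2
    have k4 := hBM x0 hx0
    have k5 := hIm x0 hx0
    by_contra hcon
    push Not at hcon
    nlinarith)
  obtain ⟨hdiff, hmono⟩ := semi_reg u _ _ _ isOpen_Ioo hG1 hG2 c1 c2
  simp only [quad_deriv1] at hmono
  have hlip : ∀ y ∈ Ioo (x - ε) (x + ε), ∀ z ∈ Ioo (x - ε) (x + ε), y ≤ z →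
      |deriv u z - deriv u y| ≤ M * |z - y| := by
    intro y hy z hz hyz
    have := hmono y hy z hz hyz
    rw [abs_le, abs_of_nonneg (by linarith : 0 ≤ z - y)]
    constructor <;> linarith
  have hvc : ContinuousOn (deriv u) (Ioo (x - ε) (x + ε)) := by
    have : LipschitzOnWith ⟨M, hM0⟩ (deriv u) (Ioo (x - ε) (x + ε)) := by
      apply LipschitzOnWith.of_dist_le_mul
      intro y hy z hz
      rw [Real.dist_eq, Real.dist_eq]
      rcases le_total y z with h | h
      · rw [abs_sub_comm, abs_sub_comm y z]; exact hlip y hy z hz h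
      · exact hlip z hz y hy h
    exact this.continuousOn
  -- Step 2
  have hsub : Icc (x - ε / 2) (x + ε / 2) ⊆ Ioo (x - ε) (x + ε) := fun y hy =>
    ⟨by linarith [hy.1], by linarith [hy.2]⟩
  have hle : x - ε / 2 ≤ x + ε / 2 := by linarith
  set g0 : ℝ → ℝ := fun y => (lam0 - H y (deriv u y)) / a y with hg0
  have hg0c : ContinuousOn g0 (Icc (x - ε / 2) (x + ε / 2)) := by
    have hv := hvc.mono hsub
    refine ContinuousOn.div ?_ ha.continuousOn (fun y hy => ?_)
    · exact continuousOn_const.sub (hHc.comp_continuousOn (continuousOn_id.prodMk hv))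
    · exact (hm0.trans (hIm y (hsub hy))).ne'
  set gE : ℝ → ℝ := IccExtend hle (domRestrict (Icc (x - ε / 2) (x + ε / 2)) g0) with hgE
  have hgEc : Continuous gE := (continuousOn_iff_continuous_domRestrict.1 hg0c).Icc_extend'
  have hgEe : ∀ y ∈ Icc (x - ε / 2) (x + ε / 2), gE y = g0 y := fun y hy => by
    rw [hgE, IccExtend_of_mem hle _ hy]; rfl
  set G' : ℝ → ℝ := fun y => ∫ t in (0 : ℝ)..y, gE t with hG'
  have hG'd : ∀ y, HasDerivAt G' (gE y) y := fun y => hgEc.integral_hasStrictDerivAt 0 y |>.hasDerivAt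
  have hG'c : Continuous G' := continuous_iff_continuousAt.2 fun y => (hG'd y).continuousAt
  set G : ℝ → ℝ := fun y => ∫ t in (0 : ℝ)..y, G' t with hG
  have hGd : ∀ y, HasDerivAt G (G' y) y := fun y => hG'c.integral_hasStrictDerivAt 0 y |>.hasDerivAt
  have eG : deriv G = G' := funext fun y => (hGd y).deriv
  have eG' : deriv G' = gE := funext fun y => (hG'd y).deriv
  have hGC : ContDiff ℝ 2 G := by
    have h1 : ContDiff ℝ 1 G' := by
      rw [contDiff_one_iff_deriv]
      exact ⟨fun y => (hG'd y).differentiableAt, by rw [eG']; exact hgEc⟩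
    have : ContDiff ℝ (1 + 1) G := by
      rw [contDiff_succ_iff_deriv]
      exact ⟨fun y => (hGd y).differentiableAt, by simp, by rw [eG]; exact h1⟩
    simpa [one_add_one_eq_two] using this
  have hsub2 : Ioo (x - ε / 2) (x + ε / 2) ⊆ Icc (x - ε / 2) (x + ε / 2) := Ioo_subset_Icc_self
  have key : ∀ φ : ℝ → ℝ, ContDiff ℝ 2 φ → ∀ x0 ∈ Ioo (x - ε / 2) (x + ε / 2),
      deriv (fun x => u x - φ x) x0 = 0 → deriv φ x0 = deriv u x0 := by
    intro φ hφ x0 hx0 h0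
    have : deriv (fun x => u x - φ x) x0 = deriv u x0 - deriv φ x0 :=
      deriv_fun_sub (hdiff x0 (hsub (hsub2 hx0))) (dφ φ hφ x0)
    linarith
  have c3 := visc_convex_sub u G hu.continuous hGC (x - ε / 2) (x + ε / 2) (by
    intro φ hφ x0 hx0 hmx
    have k0 := key φ hφ x0 hx0 hmx.deriv_eq_zero
    have k1 := hs.1 φ hφ x0 (mem_univ _) hmx
    have k5 := hm0.trans (hIm x0 (hsub (hsub2 hx0)))
    rw [eG, eG', hgEe x0 (hsub2 hx0), hg0]
    simp only
    rw [div_le_iff₀ k5, ← k0]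
    linarith)
  have c4 := visc_concave_sub u G hu.continuous hGC (x - ε / 2) (x + ε / 2) (by
    intro φ hφ x0 hx0 hmx
    have k0 := key φ hφ x0 hx0 hmx.deriv_eq_zero
    have k1 := hs.2 φ hφ x0 (mem_univ _) hmx
    have k5 := hm0.trans (hIm x0 (hsub (hsub2 hx0)))
    rw [eG, eG', hgEe x0 (hsub2 hx0), hg0]
    simp only
    rw [le_div_iff₀ k5, ← k0]
    linarith)
  obtain ⟨-, hm2⟩ := semi_reg u _ _ _ isOpen_Ioo hGC hGC c3 c4
  rw [eG] at hm2
  have hxm : x ∈ Ioo (x - ε / 2) (x + ε / 2) := ⟨by linarith, by linarith⟩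
  have hd := (hG'd x).add_const (deriv u x - G' x)
  rw [hgEe x (hsub2 hxm)] at hd
  refine hd.congr_of_eventuallyEq ?_
  filter_upwards [Ioo_mem_nhds hxm.1 hxm.2] with y hy
  rcases le_total x y with h | h
  · have := hm2 x hxm y hy h
    linarith
  · have := hm2 y hy x hxm h
    linarith

lemma v_le (l r : ℝ) (a v : ℝ → ℝ) (H : ℝ → ℝ → ℝ) (lam0 lam c K L : ℝ)
    (hpos : ∀ x ∈ Ioo l r, 0 < a x) (hc : 0 < c) (hac : ∀ x ∈ Ioo l r, a x ≤ c * (x - l) ^ 2)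
    (hv : ∀ x ∈ Ioo l r, HasDerivAt v ((lam0 - H x (v x)) / a x) x)
    (hL : ∀ x ∈ Ioo l r, |v x| ≤ L) (hH : ∀ x p, K ≤ p → lam ≤ H x p) (hlam : lam0 < lam) :
    ∀ x ∈ Ioo l r, v x ≤ K := by
  intro x0 hx0
  by_contra hcon
  push Not at hcon
  have hL0 : 0 ≤ L := (abs_nonneg _).trans (hL x0 hx0)
  have hsub : ∀ x1, l < x1 → Icc x1 x0 ⊆ Ioo l r := fun x1 h y hy =>
    ⟨by linarith [hy.1], by linarith [hy.2, hx0.2]⟩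
  have hbig : ∀ x1 ∈ Ioc l x0, K < v x1 := by
    intro x1 hx1
    by_contra h1
    push Not at h1
    have hs := hsub x1 hx1.1
    have := image_le_of_deriv_right_lt_deriv_boundary (f := v)
      (f' := fun x => (lam0 - H x (v x)) / a x) (a := x1) (b := x0) (B := fun _ => K)
      (B' := fun _ => 0)
      (fun y hy => (hv y (hs hy)).continuousAt.continuousWithinAt)
      (fun y hy => (hv y (hs (Ico_subset_Icc_self hy))).hasDerivWithinAt) h1
      (fun y => hasDerivAt_const y K)
      (fun y hy hyK => by
        refine div_neg_of_neg_of_pos ?_ (hpos y (hs (Ico_subset_Icc_self hy)))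
        have := hH y (v y) hyK.ge
        linarith) (right_mem_Icc.2 hx1.2)
    linarith
  set q := (lam - lam0) / c with hq
  have hq0 : 0 < q := div_pos (by linarith) hc
  have hx0l : 0 < x0 - l := by linarith [hx0.1]
  set Q := 2 * L + q / (x0 - l) + 1 with hQ
  have hQ0 : 0 < Q := by positivity
  set x1 := l + q / Q with hx1
  have hx1l : l < x1 := by rw [hx1]; linarith [div_pos hq0 hQ0]
  have hx10 : x1 ≤ x0 := by
    have : q / Q ≤ x0 - l := by
      rw [div_le_iff₀ hQ0]
      have e : (x0 - l) * (q / (x0 - l)) = q := by field_simp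
      rw [hQ]
      nlinarith
    linarith
  have hs := hsub x1 hx1l
  have hd : ∀ y ∈ Icc x1 x0, HasDerivAt (fun x => v x - q * (x - l)⁻¹)
      ((lam0 - H y (v y)) / a y + q / (y - l) ^ 2) y := by
    intro y hy
    have hyl : y - l ≠ 0 := by linarith [hy.1] |> fun h : 0 < y - l => h.ne'
    have h1 := (((hasDerivAt_id y).sub_const l).inv hyl).const_mul q
    refine ((hv y (hs hy)).sub h1).congr_deriv ?_
    simp; field_simp; ring
  have hanti : AntitoneOn (fun x => v x - q * (x - l)⁻¹) (Icc x1 x0) := by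
    refine antitoneOn_of_deriv_nonpos (convex_Icc _ _)
      (fun y hy => (hd y hy).continuousAt.continuousWithinAt)
      (fun y hy => (hd y (interior_subset hy)).differentiableAt.differentiableWithinAt) ?_
    intro y hy
    have hy' := interior_subset hy
    rw [(hd y hy').deriv]
    have k1 : lam ≤ H y (v y) := hH y _ (hbig y ⟨by linarith [hy'.1], hy'.2⟩).le
    have k2 := hpos y (hs hy')
    have k3 := hac y (hs hy')
    have k4 : 0 < (y - l) ^ 2 := by
      have : 0 < y - l := by linarith [hy'.1]
      positivity
    have k5 : (lam0 - H y (v y)) / a y ≤ -(lam - lam0) / a y := by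
      gcongr; linarith
    have k6 : q / (y - l) ^ 2 ≤ (lam - lam0) / a y := by
      rw [hq, div_div]
      apply div_le_div_of_nonneg_left (by linarith) k2 k3
    rw [neg_div] at k5
    linarith
  have := hanti (left_mem_Icc.2 hx10) (right_mem_Icc.2 hx10) hx10
  simp only at this
  have e1 : q * (x1 - l)⁻¹ = Q := by
    have : x1 - l = q / Q := by rw [hx1]; ring
    rw [this]; field_simp
  rw [e1, ← div_eq_mul_inv] at this
  have b1 := (abs_le.1 (hL x0 hx0)).1
  have b2 := (abs_le.1 (hL x1 (hs (left_mem_Icc.2 hx10)))).2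
  linarith

lemma clamp_mem (K p : ℝ) (hK : 0 < K) : max (-K) (min p K) ∈ Icc (-K) K :=
  ⟨le_max_left _ _, max_le (by linarith) (min_le_right _ _)⟩

lemma clamp_lip (K p q : ℝ) : |max (-K) (min p K) - max (-K) (min q K)| ≤ |p - q| := by
  have h : LipschitzWith 1 (fun p : ℝ => max (-K) (min p K)) :=
    (LipschitzWith.id.min_const K).const_max (-K)
  simpa [Real.dist_eq] using h.dist_le_mul p q

lemma ode_exists (c d K C μ : ℝ) (hcd : c ≤ d) (a : ℝ → ℝ) (H : ℝ → ℝ → ℝ) (ha : Continuous a)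
    (hpos : ∀ x ∈ Icc c d, 0 < a x) (hK : 0 < K) (hC : 0 ≤ C)
    (hHc : Continuous (fun z : ℝ × ℝ => H z.1 z.2))
    (hlip : ∀ x, ∀ p ∈ Icc (-K) K, ∀ q ∈ Icc (-K) K, |H x p - H x q| ≤ C * |p - q|) :
    ∃ f : ℝ → ℝ, f c = K ∧ ∀ t ∈ Icc c d,
      HasDerivWithinAt f ((μ - H t (max (-K) (min (f t) K))) / a t) (Icc c d) t := by
  obtain ⟨t1, ht1, hmin⟩ := isCompact_Icc.exists_isMinOn ⟨c, left_mem_Icc.2 hcd⟩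
    (ha.continuousOn (s := Icc c d))
  set m := a t1 with hm
  have hm0 : 0 < m := hpos t1 ht1
  have hma : ∀ t ∈ Icc c d, m ≤ a t := fun t ht => hmin ht
  obtain ⟨B, hB⟩ := (isCompact_Icc (a := c) (b := d)).prod (isCompact_Icc (a := -K) (b := K)) |>.exists_bound_of_continuousOn
    (f := fun z : ℝ × ℝ => (μ - H z.1 z.2) / a z.1)
    (ContinuousOn.div (continuous_const.sub hHc).continuousOn
      (ha.comp continuous_fst).continuousOn (fun z hz => (hpos z.1 hz.1).ne'))
  set B' : NNReal := B.toNNReal with hB'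
  set T : NNReal := (d - c).toNNReal with hT
  have hTe : (T : ℝ) = d - c := Real.coe_toNNReal _ (by linarith)
  have hpl : IsPicardLindelof (fun t p => (μ - H t (max (-K) (min p K))) / a t)
      (⟨c, left_mem_Icc.2 hcd⟩ : Icc c d) K (B' * T) 0 B' ((C / m).toNNReal) := by
    constructor
    · intro t ht
      apply LipschitzOnWith.of_dist_le_mul
      intro p _ q _
      rw [Real.dist_eq, Real.dist_eq, Real.coe_toNNReal _ (by positivity), ← sub_div, abs_div,
        abs_of_pos (hpos t ht), div_le_iff₀ (hpos t ht)]
      have e1 := hlip t _ (clamp_mem K p hK) _ (clamp_mem K q hK)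
      have e2 := clamp_lip K p q
      have e3 : C * |max (-K) (min p K) - max (-K) (min q K)| ≤ C * |p - q| := by gcongr
      have e4 : C * |p - q| = C / m * |p - q| * m := by field_simp
      have e5 : C / m * |p - q| * m ≤ C / m * |p - q| * a t := by
        gcongr; exact hma t ht
      rw [sub_sub_sub_cancel_left, abs_sub_comm]
      linarith
    · intro p _
      refine ContinuousOn.div ?_ ha.continuousOn (fun t ht => (hpos t ht).ne')
      exact (continuous_const.sub (hHc.comp (continuous_id.prodMk continuous_const))).continuousOn
    · intro t ht p _
      exact (hB (t, max (-K) (min p K)) ⟨ht, clamp_mem K p hK⟩).trans (Real.le_coe_toNNReal B)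
    · simp only [NNReal.coe_mul, NNReal.coe_zero, sub_zero, sub_self, hTe]
      rw [max_eq_left (by linarith)]
  exact hpl.exists_eq_forall_mem_Icc_hasDerivWithinAt₀

lemma ode_stay (c d K C μ lam0 : ℝ) (hcd : c ≤ d) (a : ℝ → ℝ) (H : ℝ → ℝ → ℝ) (v : ℝ → ℝ)
    (ha : Continuous a)
    (hpos : ∀ x ∈ Icc c d, 0 < a x) (hK : 0 < K) (hC : 0 ≤ C)
    (hHc : Continuous (fun z : ℝ × ℝ => H z.1 z.2))
    (hlip : ∀ x, ∀ p ∈ Icc (-K) K, ∀ q ∈ Icc (-K) K, |H x p - H x q| ≤ C * |p - q|)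
    (hv : ∀ x ∈ Icc c d, HasDerivAt v ((lam0 - H x (v x)) / a x) x)
    (hvK : ∀ x ∈ Icc c d, v x ∈ Icc (-K) K) (hμ : lam0 < μ) (hHK : ∀ x, μ < H x K) :
    ∃ f : ℝ → ℝ, f c = K ∧ (∀ t ∈ Icc c d, v t ≤ f t ∧ f t ≤ K) ∧
      ∀ t ∈ Icc c d, HasDerivWithinAt f ((μ - H t (f t)) / a t) (Icc c d) t := by
  obtain ⟨f, hfc, hf⟩ := ode_exists c d K C μ hcd a H ha hpos hK hC hHc hlip
  have hcont : ContinuousOn f (Icc c d) := fun t ht => (hf t ht).continuousWithinAt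
  have hf' : ∀ t ∈ Ico c d, HasDerivWithinAt f ((μ - H t (max (-K) (min (f t) K))) / a t) (Ici t) t :=
    fun t ht => (hf t (Ico_subset_Icc_self ht)).mono_of_mem_nhdsWithin (Icc_mem_nhdsGE_of_mem ht)
  have cl : ∀ p ∈ Icc (-K) K, max (-K) (min p K) = p := fun p hp => by
    rw [min_eq_left hp.2, max_eq_right hp.1]
  have hup : ∀ t ∈ Icc c d, f t ≤ K := by
    intro t ht
    refine image_le_of_deriv_right_lt_deriv_boundary (B := fun _ => K) (B' := fun _ => 0)
      hcont hf' hfc.le (fun y => hasDerivAt_const y K) ?_ ht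
    intro y hy hyK
    rw [hyK, cl K ⟨by linarith, le_rfl⟩]
    exact div_neg_of_neg_of_pos (by linarith [hHK y]) (hpos y (Ico_subset_Icc_self hy))
  have hlow : ∀ t ∈ Icc c d, v t ≤ f t := by
    intro t ht
    refine image_le_of_deriv_right_lt_deriv_boundary' (f := v) (B := f)
      (fun y hy => (hv y hy).continuousAt.continuousWithinAt)
      (fun y hy => (hv y (Ico_subset_Icc_self hy)).hasDerivWithinAt)
      (by rw [hfc]; exact (hvK c (left_mem_Icc.2 hcd)).2) hcont hf' ?_ ht
    intro y hy hyf
    rw [← hyf, cl _ (hvK y (Ico_subset_Icc_self hy))]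
    exact div_lt_div_of_pos_right (by linarith) (hpos y (Ico_subset_Icc_self hy))
  refine ⟨f, hfc, fun t ht => ⟨hlow t ht, hup t ht⟩, fun t ht => ?_⟩
  have := hf t ht
  rwa [cl _ ⟨(hvK t ht).1.trans (hlow t ht), hup t ht⟩] at this

lemma ode_main (l r K C lam lam0 : ℝ) (hlr : l < r) (a : ℝ → ℝ) (H : ℝ → ℝ → ℝ) (v : ℝ → ℝ)
    (ha : Continuous a)
    (hpos : ∀ x ∈ Ioo l r, 0 < a x) (hK : 0 < K) (hC : 0 ≤ C)
    (hHc : Continuous (fun z : ℝ × ℝ => H z.1 z.2))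
    (hlip : ∀ x, ∀ p ∈ Icc (-K) K, ∀ q ∈ Icc (-K) K, |H x p - H x q| ≤ C * |p - q|)
    (hv : ∀ x ∈ Ioo l r, HasDerivAt v ((lam0 - H x (v x)) / a x) x)
    (hvK : ∀ x ∈ Ioo l r, v x ∈ Icc (-K) K) (hlam : lam0 < lam) (hHK : ∀ x, lam + 1 ≤ H x K) :
    ∃ f : ℝ → ℝ, ∀ x ∈ Ioo l r, HasDerivAt f ((lam - H x (f x)) / a x) x ∧ v x < f x ∧ f x ≤ K := by
  set e : ℕ → ℝ := fun n => 1 / ((n : ℝ) + 3) with he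
  have he0 : ∀ n, 0 < e n := fun n => by simp only [he]; positivity
  have he1 : ∀ n, e n ≤ 1 / 3 := fun n => by
    simp only [he]
    apply one_div_le_one_div_of_le (by norm_num)
    have : (0 : ℝ) ≤ n := n.cast_nonneg
    linarith
  have hea : ∀ n m, n ≤ m → e m ≤ e n := fun n m h => by
    simp only [he]
    apply one_div_le_one_div_of_le (by positivity)
    have : (n : ℝ) ≤ m := by exact_mod_cast h
    linarith
  have hes : ∀ n m, n < m → e m < e n := fun n m h => by
    simp only [he]
    apply one_div_lt_one_div_of_lt (by positivity)
    have : (n : ℝ) < m := by exact_mod_cast h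
    linarith
  have het : Tendsto e atTop (𝓝 0) := by
    have := (tendsto_const_div_atTop_nhds_zero_nat (1 : ℝ)).comp (tendsto_add_atTop_nat 3)
    refine this.congr (fun n => ?_)
    simp [he]
  set D := r - l with hD
  have hD0 : 0 < D := by linarith
  set I : ℕ → Set ℝ := fun n => Icc (l + e n * D) (r - e n * D) with hI
  have hIle : ∀ n, l + e n * D ≤ r - e n * D := fun n => by
    have : e n * D ≤ 1 / 3 * D := by gcongr; exact he1 n
    linarith
  have hIsub : ∀ n, I n ⊆ Ioo l r := fun n x hx => by
    have := mul_pos (he0 n) hD0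
    exact ⟨by linarith [hx.1], by linarith [hx.2]⟩
  have hImono : ∀ n m, n ≤ m → I n ⊆ I m := fun n m h x hx => by
    have : e m * D ≤ e n * D := by gcongr; exact hea n m h
    exact ⟨by linarith [hx.1], by linarith [hx.2]⟩
  have hex : ∀ n, ∃ f : ℝ → ℝ, f (l + e n * D) = K ∧ (∀ t ∈ I n, v t ≤ f t ∧ f t ≤ K) ∧
      ∀ t ∈ I n, HasDerivWithinAt f ((lam + e n - H t (f t)) / a t) (I n) t := fun n =>
    ode_stay _ _ K C (lam + e n) lam0 (hIle n) a H v ha (fun x hx => hpos x (hIsub n hx)) hK hC hHc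
      hlip (fun x hx => hv x (hIsub n hx)) (fun x hx => hvK x (hIsub n hx))
      (by linarith [he0 n]) (fun x => by linarith [he1 n, hHK x])
  choose f0 hf0c hf0b hf0d using hex
  classical
  set F : ℕ → ℝ → ℝ := fun n x => if x ∈ I n then f0 n x else K with hF
  have hFe : ∀ n, ∀ x ∈ I n, F n x = f0 n x := fun n x hx => by simp only [hF, if_pos hx]
  have hFd : ∀ n, ∀ t ∈ I n, HasDerivWithinAt (F n) ((lam + e n - H t (F n t)) / a t) (I n) t := by
    intro n t ht
    rw [hFe n t ht]
    exact (hf0d n t ht).congr (hFe n) (hFe n t ht)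
  have hFb : ∀ n, ∀ t ∈ Ioo l r, v t ≤ F n t ∧ F n t ≤ K := by
    intro n t ht
    by_cases h : t ∈ I n
    · rw [hFe n t h]; exact hf0b n t h
    · simp only [hF, if_neg h]; exact ⟨(hvK t ht).2, le_rfl⟩
  have hFanti : ∀ t ∈ Ioo l r, Antitone (fun n => F n t) := by
    intro t ht n m hnm
    rcases hnm.eq_or_lt with rfl | hlt
    · exact le_rfl
    by_cases h : t ∈ I n
    swap
    · simp only [hF, if_neg h]; exact (hFb m t ht).2
    have hs := hImono n m hnm
    have c1 : ContinuousOn (F n) (I n) := fun y hy => (hFd n y hy).continuousWithinAt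
    have c2 : ContinuousOn (F m) (I n) :=
      fun y hy => ((hFd m y (hs hy)).mono hs).continuousWithinAt
    refine image_le_of_deriv_right_lt_deriv_boundary' (f := F m) (B := F n)
      (f' := fun t => (lam + e m - H t (F m t)) / a t)
      (B' := fun t => (lam + e n - H t (F n t)) / a t)
      (a := l + e n * D) (b := r - e n * D) c2 ?_ ?_ c1 ?_ ?_ h
    · intro y hy
      exact ((hFd m y (hs (Ico_subset_Icc_self hy))).mono hs).mono_of_mem_nhdsWithin
        (Icc_mem_nhdsGE_of_mem hy)
    · have hmem : l + e n * D ∈ I n := left_mem_Icc.2 (hIle n)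
      rw [hFe n _ hmem, hf0c]
      exact (hFb m _ (hIsub n hmem)).2
    · intro y hy
      exact (hFd n y (Ico_subset_Icc_self hy)).mono_of_mem_nhdsWithin
        (Icc_mem_nhdsGE_of_mem hy)
    · intro y hy hyF
      rw [hyF]
      have := hpos y (hIsub n (Ico_subset_Icc_self hy))
      have := hes n m hlt
      gcongr
  set f : ℝ → ℝ := fun x => ⨅ n, F n x with hf
  have hft : ∀ t ∈ Ioo l r, Tendsto (fun n => F n t) atTop (𝓝 (f t)) := fun t ht =>
    tendsto_atTop_ciInf (hFanti t ht) ⟨v t, by rintro _ ⟨n, rfl⟩; exact (hFb n t ht).1⟩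
  have hfb : ∀ t ∈ Ioo l r, v t ≤ f t ∧ f t ≤ K := fun t ht =>
    ⟨ge_of_tendsto' (hft t ht) fun n => (hFb n t ht).1,
      le_of_tendsto' (hft t ht) fun n => (hFb n t ht).2⟩
  have hfd : ∀ x ∈ Ioo l r, HasDerivAt f ((lam - H x (f x)) / a x) x := by
    intro x hx
    obtain ⟨N, hN⟩ : ∃ N, x ∈ Ioo (l + e N * D) (r - e N * D) := by
      have t1 : Tendsto (fun n => l + e n * D) atTop (𝓝 (l + 0 * D)) :=
        (het.mul_const D).const_add l
      have t2 : Tendsto (fun n => r - e n * D) atTop (𝓝 (r - 0 * D)) :=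
        (het.mul_const D).const_sub r
      have e1 := t1.eventually (gt_mem_nhds (by linarith [hx.1] : l + 0 * D < x))
      have e2 := t2.eventually (lt_mem_nhds (by linarith [hx.2] : x < r - 0 * D))
      obtain ⟨N, h⟩ := (e1.and e2).exists
      exact ⟨N, h⟩
    set c := l + e N * D with hc
    set d := r - e N * D with hd
    have hcd : c ≤ d := hIle N
    have hII : I N = Icc c d := rfl
    have hsub : Icc c d ⊆ Ioo l r := hIsub N
    obtain ⟨B, hB⟩ := (isCompact_Icc (a := c) (b := d)).prod (isCompact_Icc (a := -K) (b := K)) |>.exists_bound_of_continuousOn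
      (f := fun z : ℝ × ℝ => (|lam - H z.1 z.2| + 1) / a z.1)
      (ContinuousOn.div ((continuous_const.sub hHc).abs.add continuous_const).continuousOn
        (ha.comp continuous_fst).continuousOn (fun z hz => (hpos z.1 (hsub hz.1)).ne'))
    have hFmem : ∀ n, ∀ t ∈ Icc c d, F n t ∈ Icc (-K) K := fun n t ht =>
      ⟨(hvK t (hsub ht)).1.trans (hFb n t (hsub ht)).1, (hFb n t (hsub ht)).2⟩
    have hbd : ∀ n, ∀ t ∈ Icc c d, ‖(lam + e n - H t (F n t)) / a t‖ ≤ B := by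
      intro n t ht
      have h1 := (le_abs_self _).trans (hB (t, F n t) ⟨ht, hFmem n t ht⟩)
      have h2 := hpos t (hsub ht)
      refine le_trans ?_ h1
      rw [Real.norm_eq_abs, abs_div, abs_of_pos h2]
      gcongr
      have h3 := abs_add_le (lam - H t (F n t)) (e n)
      rw [abs_of_pos (he0 n)] at h3
      have h4 : lam + e n - H t (F n t) = lam - H t (F n t) + e n := by ring
      rw [h4]
      linarith [he1 n]
    have hFd' : ∀ n, N ≤ n → ∀ t ∈ Icc c d,
        HasDerivWithinAt (F n) ((lam + e n - H t (F n t)) / a t) (Icc c d) t := fun n hn t ht =>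
      (hFd n t (hImono N n hn ht)).mono (hImono N n hn)
    have hFcont : ∀ n, N ≤ n → ContinuousOn (F n) (Icc c d) := fun n hn t ht =>
      (hFd' n hn t ht).continuousWithinAt
    have hflip : ∀ y ∈ Icc c d, ∀ z ∈ Icc c d, |f z - f y| ≤ B * |z - y| := by
      intro y hy z hz
      refine le_of_tendsto (((hft z (hsub hz)).sub (hft y (hsub hy))).abs) ?_
      filter_upwards [eventually_ge_atTop N] with n hn
      exact (convex_Icc c d).norm_image_sub_le_of_norm_hasDerivWithin_le (hFd' n hn) (hbd n) hy hz
    have hfcont : ContinuousOn f (Icc c d) := by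
      have hB0 : 0 ≤ B := (norm_nonneg _).trans (hbd 0 c (left_mem_Icc.2 hcd))
      have : LipschitzOnWith ⟨B, hB0⟩ f (Icc c d) := by
        apply LipschitzOnWith.of_dist_le_mul
        intro y hy z hz
        rw [Real.dist_eq, Real.dist_eq]
        exact hflip z hz y hy
      exact this.continuousOn
    have hcomp : ∀ μ, ∀ w : ℝ → ℝ, ContinuousOn w (Icc c d) →
        ContinuousOn (fun t => (μ - H t (w t)) / a t) (Icc c d) := by
      intro μ w hw
      refine ContinuousOn.div ?_ ha.continuousOn (fun y hy => (hpos y (hsub hy)).ne')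
      exact continuousOn_const.sub (hHc.comp_continuousOn (continuousOn_id.prodMk hw))
    have hsubu : ∀ y ∈ Icc c d, uIcc c y ⊆ Icc c d := fun y hy => by
      rw [uIcc_of_le hy.1]; exact Icc_subset_Icc_right hy.2
    have hint : ∀ y ∈ Icc c d, f y - f c = ∫ t in c..y, (lam - H t (f t)) / a t := by
      intro y hy
      have hsu := hsubu y hy
      have hsu' : uIoc c y ⊆ Icc c d := uIoc_subset_uIcc.trans hsu
      have t1 := (hft y (hsub hy)).sub (hft c (hsub (left_mem_Icc.2 hcd)))
      refine tendsto_nhds_unique t1 ?_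
      have t2 : Tendsto (fun n => ∫ t in c..y, (lam + e n - H t (F n t)) / a t) atTop
          (𝓝 (∫ t in c..y, (lam - H t (f t)) / a t)) := by
        refine intervalIntegral.tendsto_integral_filter_of_dominated_convergence (fun _ => B) ?_ ?_
          ?_ ?_
        · filter_upwards [eventually_ge_atTop N] with n hn
          exact ((hcomp _ _ (hFcont n hn)).mono hsu').aestronglyMeasurable measurableSet_uIoc
        · exact Eventually.of_forall fun n => Eventually.of_forall fun t ht => hbd n t (hsu' ht)
        · exact intervalIntegrable_const
        · refine Eventually.of_forall fun t ht => ?_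
          have h1 := hft t (hsub (hsu' ht))
          have h2 : Tendsto (fun n => H t (F n t)) atTop (𝓝 (H t (f t))) :=
            (hHc.tendsto (t, f t)).comp (tendsto_const_nhds.prodMk_nhds h1)
          have h3 := ((het.const_add lam).sub h2).div_const (a t)
          simpa using h3
      refine t2.congr' ?_
      filter_upwards [eventually_ge_atTop N] with n hn
      refine intervalIntegral.integral_eq_sub_of_hasDerivAt_of_le hy.1
        ((hFcont n hn).mono (Icc_subset_Icc_right hy.2)) ?_ ?_
      · intro t ht
        exact (hFd' n hn t ⟨ht.1.le, ht.2.le.trans hy.2⟩).hasDerivAt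
          (Icc_mem_nhds ht.1 (ht.2.trans_le hy.2))
      · exact ((hcomp _ _ (hFcont n hn)).mono hsu).intervalIntegrable
    have hxm : x ∈ Icc c d := Ioo_subset_Icc_self hN
    have hgc := hcomp lam f hfcont
    have hder := intervalIntegral.integral_hasDerivAt_right (a := c) (b := x)
      ((hgc.mono (hsubu x hxm)).intervalIntegrable)
      ((hgc.mono Ioo_subset_Icc_self).stronglyMeasurableAtFilter isOpen_Ioo x hN)
      (hgc.continuousAt (Icc_mem_nhds hN.1 hN.2))
    refine (hder.const_add (f c)).congr_of_eventuallyEq ?_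
    filter_upwards [Icc_mem_nhds hN.1 hN.2] with y hy
    have := hint y hy
    linarith
  refine ⟨f, fun x hx => ⟨hfd x hx, ?_, (hfb x hx).2⟩⟩
  refine lt_of_le_of_ne (hfb x hx).1 fun heq => ?_
  have hmin : IsLocalMin (fun y => f y - v y) x := by
    filter_upwards [Ioo_mem_nhds hx.1 hx.2] with y hy
    rw [← heq]
    linarith [(hfb y hy).1]
  have h0 := hmin.hasDerivAt_eq_zero ((hfd x hx).sub (hv x hx))
  rw [← heq, ← sub_div] at h0
  have := hpos x hx
  rw [div_eq_zero_iff] at h0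
  rcases h0 with h0 | h0 <;> linarith

lemma comp_interval (a : ℝ → ℝ) (ha : Continuous a) (hA : ∀ x, 0 ≤ a x) (x : ℝ) (hx : 0 < a x)
    (hb : Bornology.IsBounded (connectedComponentIn {y : ℝ | 0 < a y} x)) :
    ∃ l r, l < r ∧ connectedComponentIn {y : ℝ | 0 < a y} x = Ioo l r ∧ a l = 0 ∧ a r = 0 ∧
      ∀ y ∈ Ioo l r, 0 < a y := by
  set A : Set ℝ := {y : ℝ | 0 < a y} with hAdef
  set C := connectedComponentIn A x with hC
  have hAo : IsOpen A := isOpen_lt continuous_const ha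
  have hCo : IsOpen C := hAo.connectedComponentIn
  have hxC : x ∈ C := mem_connectedComponentIn hx
  have hpre : IsPreconnected C := isPreconnected_connectedComponentIn
  have hba : BddAbove C := hb.bddAbove
  have hbb : BddBelow C := hb.bddBelow
  have hCA : C ⊆ A := connectedComponentIn_subset _ _
  have hsub : Ioo (sInf C) (sSup C) ⊆ C :=
    IsConnected.Ioo_csInf_csSup_subset ⟨⟨x, hxC⟩, hpre⟩ hbb hba
  have hCI : C = Ioo (sInf C) (sSup C) := by
    refine Subset.antisymm (fun y hy => ?_) hsub
    obtain ⟨ε, hε, hball⟩ := Metric.isOpen_iff.1 hCo y hy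
    have h1 : y - ε / 2 ∈ C := hball (by
      rw [Metric.mem_ball, Real.dist_eq, abs_lt]; constructor <;> linarith)
    have h2 : y + ε / 2 ∈ C := hball (by
      rw [Metric.mem_ball, Real.dist_eq, abs_lt]; constructor <;> linarith)
    exact ⟨by linarith [csInf_le hbb h1], by linarith [le_csSup hba h2]⟩
  have hxI : x ∈ Ioo (sInf C) (sSup C) := hCI ▸ hxC
  have hposI : ∀ y ∈ Ioo (sInf C) (sSup C), 0 < a y := fun y hy => hCA (hsub hy)
  refine ⟨sInf C, sSup C, hxI.1.trans hxI.2, hCI, ?_, ?_, hposI⟩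
  · by_contra hne
    have hp : 0 < a (sInf C) := lt_of_le_of_ne (hA _) (Ne.symm hne)
    have hs : Ico (sInf C) (sSup C) ⊆ A := fun y hy => by
      rcases hy.1.eq_or_lt with h | h
      · rw [← h]; exact hp
      · exact hposI y ⟨h, hy.2⟩
    have := isPreconnected_Ico.subset_connectedComponentIn (Ioo_subset_Ico_self hxI) hs
      (left_mem_Ico.2 (hxI.1.trans hxI.2))
    exact lt_irrefl _ (hCI.subset this).1
  · by_contra hne
    have hp : 0 < a (sSup C) := lt_of_le_of_ne (hA _) (Ne.symm hne)
    have hs : Ioc (sInf C) (sSup C) ⊆ A := fun y hy => by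
      rcases hy.2.eq_or_lt with h | h
      · rw [h]; exact hp
      · exact hposI y ⟨hy.1, h⟩
    have := isPreconnected_Ioc.subset_connectedComponentIn (Ioo_subset_Ioc_self hxI) hs
      (right_mem_Ioc.2 (hxI.1.trans hxI.2))
    exact lt_irrefl _ (hCI.subset this).2

lemma glue (A : Set ℝ) (hA : IsOpen A) (G : ℝ → ℝ → ℝ) (Q : ℝ → ℝ → Prop)
    (h : ∀ x ∈ A, ∃ f : ℝ → ℝ, ∀ y ∈ connectedComponentIn A x,
      HasDerivAt f (G y (f y)) y ∧ Q y (f y)) :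
    ∃ f : ℝ → ℝ, ∀ y ∈ A, HasDerivAt f (G y (f y)) y ∧ Q y (f y) := by
  have h' : ∀ C : Set ℝ, ∃ f : ℝ → ℝ, (∃ x ∈ A, C = connectedComponentIn A x) →
      ∀ y ∈ C, HasDerivAt f (G y (f y)) y ∧ Q y (f y) := by
    intro C
    by_cases hC : ∃ x ∈ A, C = connectedComponentIn A x
    · obtain ⟨x, hx, rfl⟩ := hC
      obtain ⟨f, hf⟩ := h x hx
      exact ⟨f, fun _ => hf⟩
    · exact ⟨fun _ => 0, fun h => absurd h hC⟩
  choose g hg using h'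
  refine ⟨fun y => g (connectedComponentIn A y) y, fun y hy => ?_⟩
  obtain ⟨h1, h2⟩ := hg (connectedComponentIn A y) ⟨y, hy, rfl⟩ y (mem_connectedComponentIn hy)
  refine ⟨h1.congr_of_eventuallyEq ?_, h2⟩
  filter_upwards [hA.connectedComponentIn.mem_nhds (mem_connectedComponentIn hy)] with z hz
  rw [← connectedComponentIn_eq hz]

lemma c1_of (a : ℝ → ℝ) (H : ℝ → ℝ → ℝ) (lam : ℝ) (f : ℝ → ℝ) (ha : Continuous a)
    (hHc : Continuous (fun z : ℝ × ℝ => H z.1 z.2))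
    (hf : ∀ y, 0 < a y → HasDerivAt f ((lam - H y (f y)) / a y) y) :
    ContDiffOn ℝ 1 f {x : ℝ | 0 < a x} ∧ ∀ x, 0 < a x → a x * deriv f x + H x (f x) = lam := by
  have hAo : IsOpen {x : ℝ | 0 < a x} := isOpen_lt continuous_const ha
  have hfc : ContinuousOn f {x : ℝ | 0 < a x} := fun y hy =>
    (hf y hy).continuousAt.continuousWithinAt
  constructor
  · rw [show (1 : WithTop ℕ∞) = 0 + 1 by simp, contDiffOn_succ_iff_deriv_of_isOpen hAo]
    refine ⟨fun y hy => (hf y hy).differentiableAt.differentiableWithinAt, by simp, ?_⟩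
    rw [contDiffOn_zero]
    refine ContinuousOn.congr (f := fun y => (lam - H y (f y)) / a y) ?_
      (fun y hy => (hf y hy).deriv)
    refine ContinuousOn.div ?_ ha.continuousOn (fun y hy => (ne_of_gt hy))
    exact continuousOn_const.sub (hHc.comp_continuousOn (continuousOn_id.prodMk hfc))
  · intro x hx
    rw [(hf x hx).deriv]
    field_simp
    ring

lemma refl_deriv (f : ℝ → ℝ) (x d : ℝ) (h : HasDerivAt f d (-x)) :
    HasDerivAt (fun y => - f (-y)) d x := by
  have := (h.comp x (hasDerivAt_neg x)).neg
  refine HasDerivAt.congr_deriv (f := fun y => - f (-y)) this ?_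
  ring

lemma K_prop (α0 g lam : ℝ) (h0 : 0 < α0) (hg : 2 < g) (p : ℝ)
    (hp : 1 + (|lam| + 1 + 1 / α0) / α0 ≤ |p|) : lam + 1 ≤ α0 * |p| ^ g - 1 / α0 := by
  have h1 : 1 ≤ |p| := by
    have : 0 ≤ (|lam| + 1 + 1 / α0) / α0 := by positivity
    linarith
  have h2 : |p| ≤ |p| ^ g := by
    have := rpow_le_rpow_of_exponent_le h1 (by linarith : (1 : ℝ) ≤ g)
    rwa [rpow_one] at this
  have h3 : α0 * (1 + (|lam| + 1 + 1 / α0) / α0) ≤ α0 * |p| ^ g := by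
    gcongr; linarith
  have h4 : α0 * (1 + (|lam| + 1 + 1 / α0) / α0) = α0 + (|lam| + 1 + 1 / α0) := by
    field_simp
  linarith [le_abs_self lam]

lemma interval_sol (l r : ℝ) (hlr : l < r) (a : ℝ → ℝ) (H : ℝ → ℝ → ℝ) (v : ℝ → ℝ)
    (κ α0 α1 g lam0 lam K L : ℝ) (ha : Continuous a) (hκ : 0 < κ)
    (hal : ∀ x, a x ≤ κ ^ 2 * (x - l) ^ 2) (har : ∀ x, a x ≤ κ ^ 2 * (x - r) ^ 2)
    (hpos : ∀ x ∈ Ioo l r, 0 < a x) (h1 : 0 < α1) (hg : 2 < g)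
    (hH : HamClass α0 α1 g H) (hlam : lam0 < lam) (hK : 0 < K)
    (hHK : ∀ x p, K ≤ |p| → lam + 1 ≤ H x p)
    (hv : ∀ x ∈ Ioo l r, HasDerivAt v ((lam0 - H x (v x)) / a x) x)
    (hL : ∀ x, |v x| ≤ L) :
    (∃ f : ℝ → ℝ, ∀ x ∈ Ioo l r, HasDerivAt f ((lam - H x (f x)) / a x) x ∧
      (v x < f x ∧ |f x| ≤ K)) ∧
    (∃ f : ℝ → ℝ, ∀ x ∈ Ioo l r, HasDerivAt f ((lam - H x (f x)) / a x) x ∧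
      (f x < v x ∧ |f x| ≤ K)) := by
  have hHc := H_cont α0 α1 g H hg hH
  have hlip : ∀ x, ∀ p ∈ Icc (-K) K, ∀ q ∈ Icc (-K) K,
      |H x p - H x q| ≤ (α1 * (2 * K + 1) ^ (g - 1)) * |p - q| := by
    intro x p hp q hq
    refine (hH.2.2.1 x p q).trans ?_
    have e1 : |p| ≤ K := abs_le.2 hp
    have e2 : |q| ≤ K := abs_le.2 hq
    gcongr
    · linarith
    · linarith
  have hneg : ∀ x ∈ Ioo (-r) (-l), -x ∈ Ioo l r := fun x hx =>
    ⟨by linarith [hx.2], by linarith [hx.1]⟩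
  have hv' : ∀ x ∈ Ioo (-r) (-l), HasDerivAt (fun y => - v (-y))
      ((lam0 - (fun x p => H (-x) (-p)) x ((fun y => - v (-y)) x)) / (fun x => a (-x)) x) x := by
    intro x hx
    have := refl_deriv v x _ (hv (-x) (hneg x hx))
    simpa using this
  have hκ2 : 0 < κ ^ 2 := by positivity
  have u1 := v_le l r a v H lam0 lam (κ ^ 2) K L hpos hκ2 (fun x _ => hal x) hv (fun x _ => hL x)
    (fun x p hp => by linarith [hHK x p (hp.trans (le_abs_self p))]) hlam
  have u2 := v_le (-r) (-l) (fun x => a (-x)) (fun y => - v (-y)) (fun x p => H (-x) (-p))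
    lam0 lam (κ ^ 2) K L (fun x hx => hpos _ (hneg x hx)) hκ2
    (fun x _ => by
      have := har (-x)
      have e : (-x - r) ^ 2 = (x - -r) ^ 2 := by ring
      rwa [e] at this) hv' (fun x _ => by simpa using hL (-x))
    (fun x p hp => by
      have := hHK (-x) (-p) (by rw [abs_neg]; exact hp.trans (le_abs_self p))
      linarith) hlam
  have hvK : ∀ x ∈ Ioo l r, v x ∈ Icc (-K) K := fun x hx => by
    have := u2 (-x) ⟨by linarith [hx.2], by linarith [hx.1]⟩
    simp only [neg_neg] at this
    exact ⟨by linarith, u1 x hx⟩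
  have hC : 0 ≤ α1 * (2 * K + 1) ^ (g - 1) := by positivity
  constructor
  · obtain ⟨f, hf⟩ := ode_main l r K _ lam lam0 hlr a H v ha hpos hK hC hHc hlip hv hvK hlam
      (fun x => hHK x K (le_abs_self K))
    refine ⟨f, fun x hx => ⟨(hf x hx).1, (hf x hx).2.1, abs_le.2 ⟨?_, (hf x hx).2.2⟩⟩⟩
    linarith [(hf x hx).2.1, (hvK x hx).1]
  · obtain ⟨f, hf⟩ := ode_main (-r) (-l) K _ lam lam0 (by linarith) (fun x => a (-x))
      (fun x p => H (-x) (-p)) (fun y => - v (-y)) (ha.comp continuous_neg)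
      (fun x hx => hpos _ (hneg x hx)) hK hC
      (hHc.comp ((continuous_fst.neg).prodMk continuous_snd.neg))
      (fun x p hp q hq => by
        have := hlip (-x) (-p) ⟨by linarith [hp.2], by linarith [hp.1]⟩ (-q)
          ⟨by linarith [hq.2], by linarith [hq.1]⟩
        rwa [neg_sub_neg, abs_sub_comm q p] at this)
      hv' (fun x hx => by
        have := hvK _ (hneg x hx)
        exact ⟨by linarith [this.2], by linarith [this.1]⟩) hlam
      (fun x => hHK (-x) (-K) (by rw [abs_neg]; exact le_abs_self K))
    refine ⟨fun y => - f (-y), fun x hx => ?_⟩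
    obtain ⟨k1, k2, k3⟩ := hf (-x) ⟨by linarith [hx.2], by linarith [hx.1]⟩
    simp only [neg_neg] at k1 k2
    refine ⟨refl_deriv f x _ k1, by linarith, ?_⟩
    rw [abs_neg, abs_le]
    exact ⟨by linarith [(hvK x hx).2], k3⟩

/-- Proposition `appC prop pre-existence`: for `lam > λ₀` and `u_{λ₀}` a
Lipschitz viscosity solution at the critical level, there exist `C¹` solutions
`f⁻_lam < u'_{λ₀} < f⁺_lam` of the ODE `a f' + H(x,f) = lam` on `A := {a > 0}`, bounded by
a constant `K_lam = K(α₀,α₁,γ,lam)` depending only on `α₀, α₁, γ` and `lam`. -/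
theorem statement_9 :
    ∃ K : ℝ → ℝ → ℝ → ℝ → ℝ,
      ∀ (a : ℝ → ℝ) (H : ℝ → ℝ → ℝ) (phat : ℝ → ℝ)
        (κ α0 α1 γ η lam0 lam : ℝ) (ulam0 : ℝ → ℝ),
        (∀ x, a x ∈ Set.Icc (0:ℝ) 1) →
        0 < κ → (∀ x y : ℝ, |Real.sqrt (a x) - Real.sqrt (a y)| ≤ κ * |x - y|) →
        CondA1' a →
        0 < α0 → 0 < α1 → 2 < γ → 0 < η →
        HamSqc α0 α1 γ η H phat →
        lam0 = CriticalValue a H →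
        lam0 < lam →
        (∃ L : NNReal, LipschitzWith L ulam0) →
        ViscSolOn a H lam0 Set.univ ulam0 →
        ∃ fm fp : ℝ → ℝ,
          ContDiffOn ℝ 1 fm {x : ℝ | 0 < a x} ∧
          ContDiffOn ℝ 1 fp {x : ℝ | 0 < a x} ∧
          (∀ x : ℝ, 0 < a x → fm x < deriv ulam0 x ∧ deriv ulam0 x < fp x) ∧
          (∀ x : ℝ, 0 < a x → a x * deriv fm x + H x (fm x) = lam) ∧
          (∀ x : ℝ, 0 < a x → a x * deriv fp x + H x (fp x) = lam) ∧
          (∀ x : ℝ, 0 < a x → |fm x| ≤ K α0 α1 γ lam ∧ |fp x| ≤ K α0 α1 γ lam) := by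
  refine ⟨fun α0 _ _ lam => 1 + (|lam| + 1 + 1 / α0) / α0, ?_⟩
  intro a H phat κ α0 α1 γ η lam0 lam u ha01 hκ hκl hA1 h0 h1 hγ _ hH _ hlam hLip hs
  obtain ⟨L, hL⟩ := hLip
  have hHam := hH.1
  have hHc := H_cont α0 α1 γ H hγ hHam
  have hsq : ∀ x, Real.sqrt (a x) ^ 2 = a x := fun x => Real.sq_sqrt (ha01 x).1
  have hac : Continuous a := by
    have : LipschitzWith ⟨κ, hκ.le⟩ (fun x => Real.sqrt (a x)) := by
      apply LipschitzWith.of_dist_le_mul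
      intro x y
      rw [Real.dist_eq, Real.dist_eq]
      exact hκl x y
    have h2 : a = fun x => Real.sqrt (a x) ^ 2 := funext fun x => (hsq x).symm
    rw [h2]
    exact this.continuous.pow 2
  have hquad : ∀ l, a l = 0 → ∀ x, a x ≤ κ ^ 2 * (x - l) ^ 2 := by
    intro l hl x
    have h2 := hκl x l
    rw [hl, Real.sqrt_zero, sub_zero] at h2
    rw [← hsq x, ← sq_abs (Real.sqrt (a x)), ← sq_abs (x - l), ← mul_pow]
    gcongr
  have hreg := visc_reg a H α0 α1 γ lam0 u L hac h0 h1 hγ hHam hL hs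
  have hvL : ∀ x, |deriv u x| ≤ L := fun x => norm_deriv_le_of_lipschitz hL
  set K := 1 + (|lam| + 1 + 1 / α0) / α0 with hK
  have hK0 : 0 < K := by positivity
  have hHK : ∀ x p, K ≤ |p| → lam + 1 ≤ H x p := fun x p hp =>
    (K_prop α0 γ lam h0 hγ p hp).trans (hHam.1 x p)
  have hAo : IsOpen {x : ℝ | 0 < a x} := isOpen_lt continuous_const hac
  have hloc : ∀ x, 0 < a x →
      (∃ f : ℝ → ℝ, ∀ y ∈ connectedComponentIn {y : ℝ | 0 < a y} x,
        HasDerivAt f ((lam - H y (f y)) / a y) y ∧ (deriv u y < f y ∧ |f y| ≤ K)) ∧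
      (∃ f : ℝ → ℝ, ∀ y ∈ connectedComponentIn {y : ℝ | 0 < a y} x,
        HasDerivAt f ((lam - H y (f y)) / a y) y ∧ (f y < deriv u y ∧ |f y| ≤ K)) := fun x hx => by
    obtain ⟨l, r, hlr, hC, hl, hr, hpos⟩ :=
      comp_interval a hac (fun x => (ha01 x).1) x hx (hA1.2 x hx)
    have := interval_sol l r hlr a H (deriv u) κ α0 α1 γ lam0 lam K L hac hκ (hquad l hl)
      (hquad r hr) hpos h1 hγ hHam hlam hK0 hHK (fun y hy => hreg y (hpos y hy)) hvL
    rw [← hC] at this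
    exact this
  obtain ⟨fp, hfp⟩ := glue {x : ℝ | 0 < a x} hAo (fun y p => (lam - H y p) / a y)
    (fun y p => deriv u y < p ∧ |p| ≤ K) (fun x hx => (hloc x hx).1)
  obtain ⟨fm, hfm⟩ := glue {x : ℝ | 0 < a x} hAo (fun y p => (lam - H y p) / a y)
    (fun y p => p < deriv u y ∧ |p| ≤ K) (fun x hx => (hloc x hx).2)
  obtain ⟨p1, p2⟩ := c1_of a H lam fp hac hHc (fun y hy => (hfp y hy).1)
  obtain ⟨m1, m2⟩ := c1_of a H lam fm hac hHc (fun y hy => (hfm y hy).1)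
  exact ⟨fm, fp, m1, p1, fun x hx => ⟨(hfm x hx).2.1, (hfp x hx).2.1⟩, m2, p2,
    fun x hx => ⟨(hfm x hx).2.2, (hfp x hx).2.2⟩⟩
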